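/- Let ρ ∈ (−1, 1) and n ≥ 1, and let Z̄ = (Z₁ + ⋯ + Zₙ)/n, where Z₁, …, Zₙ are independent and identically distributed copies of Z = XY, with X and V independent standard normal random variables and Y = ρX + √(1 − ρ²)V. Then the law of Z̄ is absolutely continuous with respect to Lebesgue measure, with density p(x) = (n^{(n+1)/2} 2^{(1−n)/2} |x|^{(n−1)/2}) / (√(π(1 − ρ²)) Γ(n/2)) · exp(ρ n x/(1 − ρ²)) · K_{(n−1)/2}(n|x|/(1 − ρ²)) for x ≠ 0, where K_ν(y) = ∫₀^∞ e^{−y cosh t} cosh(νt) dt. -/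

import Mathlib

open MeasureTheory ProbabilityTheory

/-- The modified Bessel function of the second kind,
`K_ν(y) = ∫₀^∞ e^{−y cosh t} cosh(νt) dt`. -/
noncomputable def besselK (ν y : ℝ) : ℝ :=
  ∫ t in Set.Ioi (0 : ℝ), Real.exp (-(y * Real.cosh t)) * Real.cosh (ν * t)

/-- The law of `Z = XY` where `X, V` are independent standard normals and
`Y = ρX + √(1 − ρ²)V`. -/
noncomputable def lawZ (ρ : ℝ) : Measure ℝ :=
  Measure.map (fun p : ℝ × ℝ => p.1 * (ρ * p.1 + Real.sqrt (1 - ρ ^ 2) * p.2))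
    ((gaussianReal 0 1).prod (gaussianReal 0 1))

/-!
Given `X`, the product `X (ρ X + √(1 - ρ²) V)` is normal with mean `ρ X²` and variance
`(1 - ρ²) X²`, so `Z` is a normal variance-mean mixture whose mixing variable `X²` has the gamma
law of shape and rate `1/2`: a variance-gamma law. The characteristic function of a variance-gamma
law of shape `a` is the power `w ^ (-a)` of a function `w` that does not depend on `a`, hence shapes
add under independent sums; dividing by `n` only rescales the two normal parameters. Finally the
gamma mixture of the normal densities at `x` is an integral of the form
`∫ s ^ (ν - 1) * exp (-(y / 2) * (s / c + c / s)) ds`, which the substitution `s = c * exp t` turns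
into `2 * c ^ ν * K_ν(y)`.
-/

open Set
open scoped ENNReal NNReal

/-! ### The Bessel function -/

theorem sq_div_four_le_cosh (t : ℝ) : t ^ 2 / 4 ≤ Real.cosh t := by
  have hexp := Real.quadratic_le_exp_of_nonneg (abs_nonneg t)
  rw [sq_abs] at hexp
  rw [← Real.cosh_abs, Real.cosh_eq]
  linarith [abs_nonneg t, Real.exp_pos (-|t|)]

theorem integrable_exp_neg_mul_cosh_mul_exp (ν : ℝ) {y : ℝ} (hy : 0 < y) :
    Integrable fun t : ℝ => Real.exp (-(y * Real.cosh t)) * Real.exp (ν * t) := by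
  have hgauss : Integrable
      fun t : ℝ => Real.exp (ν ^ 2 / y) * Real.exp (-(y / 4) * (t - 2 * ν / y) ^ 2) :=
    ((integrable_exp_neg_mul_sq (by positivity : 0 < y / 4)).comp_sub_right (2 * ν / y)).const_mul _
  refine hgauss.mono' (Continuous.aestronglyMeasurable (by fun_prop)) (ae_of_all _ fun t => ?_)
  have hsq : ν ^ 2 / y + -(y / 4) * (t - 2 * ν / y) ^ 2 = -(y * (t ^ 2 / 4)) + ν * t := by
    field_simp
    ring
  rw [Real.norm_of_nonneg (by positivity), ← Real.exp_add, ← Real.exp_add, hsq]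
  gcongr
  exact sq_div_four_le_cosh t

theorem integral_exp_neg_mul_cosh_mul_exp (ν : ℝ) {y : ℝ} (hy : 0 < y) :
    ∫ t : ℝ, Real.exp (-(y * Real.cosh t)) * Real.exp (ν * t) = 2 * besselK ν y := by
  have hint := integrable_exp_neg_mul_cosh_mul_exp ν hy
  rw [← intervalIntegral.integral_Iic_add_Ioi hint.integrableOn hint.integrableOn (b := 0),
    ← neg_zero, ← integral_comp_neg_Ioi, neg_zero,
    ← integral_add hint.comp_neg.integrableOn hint.integrableOn, besselK, ← integral_const_mul]
  refine integral_congr_ae (ae_of_all _ fun t => ?_)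
  simp only [Real.cosh_neg, mul_neg, Real.cosh_eq (ν * t)]
  ring

theorem setLIntegral_Ioi_eq_lintegral_mul_exp {c : ℝ} (hc : 0 < c) (g : ℝ → ℝ≥0∞) :
    ∫⁻ s in Ioi 0, g s = ∫⁻ t : ℝ, ENNReal.ofReal (c * Real.exp t) * g (c * Real.exp t) := by
  have himage : (fun t : ℝ => c * Real.exp t) '' univ = Ioi 0 := by
    rw [← image_image (fun x => c * x) Real.exp, image_univ, Real.range_exp,
      image_mul_left_Ioi hc, mul_zero]
  rw [← himage, lintegral_image_eq_lintegral_abs_deriv_mul MeasurableSet.univ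
    (fun t _ => ((Real.hasDerivAt_exp t).const_mul c).hasDerivWithinAt)
    ((mul_right_injective₀ hc.ne').comp Real.exp_injective).injOn, setLIntegral_univ]
  refine lintegral_congr fun t => ?_
  rw [abs_of_pos (by positivity)]

theorem setLIntegral_Ioi_rpow_mul_exp_eq_besselK (ν : ℝ) {c y : ℝ} (hc : 0 < c) (hy : 0 < y) :
    ∫⁻ s in Ioi 0, ENNReal.ofReal (s ^ (ν - 1) * Real.exp (-(y / 2 * (s / c + c / s)))) =
      ENNReal.ofReal (2 * c ^ ν * besselK ν y) := by
  have hsubst (t : ℝ) : c * Real.exp t * ((c * Real.exp t) ^ (ν - 1) * Real.exp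
      (-(y / 2 * (c * Real.exp t / c + c / (c * Real.exp t))))) =
      c ^ ν * (Real.exp (-(y * Real.cosh t)) * Real.exp (ν * t)) := by
    have hpow : c * Real.exp t * (c * Real.exp t) ^ (ν - 1) = c ^ ν * Real.exp (ν * t) := by
      rw [mul_comm, ← Real.rpow_add_one (by positivity), sub_add_cancel,
        Real.mul_rpow hc.le (Real.exp_pos t).le, ← Real.exp_mul, mul_comm t]
    have hcosh : c * Real.exp t / c + c / (c * Real.exp t) = 2 * Real.cosh t := by
      rw [Real.cosh_eq, Real.exp_neg]
      field_simp
    rw [← mul_assoc, hpow, hcosh, show y / 2 * (2 * Real.cosh t) = y * Real.cosh t by ring]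
    ring
  rw [setLIntegral_Ioi_eq_lintegral_mul_exp hc]
  simp_rw [← ENNReal.ofReal_mul (mul_pos hc (Real.exp_pos _)).le, hsubst]
  rw [← ofReal_integral_eq_lintegral_ofReal
      ((integrable_exp_neg_mul_cosh_mul_exp ν hy).const_mul _) (ae_of_all _ fun t => by positivity),
    integral_const_mul, integral_exp_neg_mul_cosh_mul_exp ν hy]
  congr 1
  ring

/-! ### Gamma laws -/

theorem eqOn_complexMGF_of_eqOn_mgf {Ω : Type*} [MeasurableSpace Ω] {X : Ω → ℝ} {μ : Measure Ω}
    {f : ℂ → ℂ} {s : Set ℝ} (hs : IsOpen s) (hconv : Convex ℝ s) (hsX : s ⊆ integrableExpSet X μ)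
    (hf : AnalyticOnNhd ℂ f {z | z.re ∈ s}) (hfX : ∀ x ∈ s, f x = mgf X μ x) :
    EqOn (complexMGF X μ) f {z | z.re ∈ s} := by
  rcases s.eq_empty_or_nonempty with rfl | ⟨x₀, hx₀⟩
  · simp
  have hmgf : AnalyticOnNhd ℂ (complexMGF X μ) {z | z.re ∈ s} :=
    analyticOnNhd_complexMGF.mono fun z hz => hs.subset_interior_iff.2 hsX hz
  have hstrip : IsPreconnected {z : ℂ | z.re ∈ s} :=
    (hconv.linear_preimage Complex.reLm).isPreconnected
  refine hmgf.eqOn_of_preconnected_of_frequently_eq hf hstrip (z₀ := (x₀ : ℂ)) (by simpa) ?_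
  have hreal : ∀ᶠ x : ℝ in nhdsWithin x₀ {x₀}ᶜ, complexMGF X μ x = f x := by
    filter_upwards [mem_nhdsWithin_of_mem_nhds (hs.mem_nhds hx₀)] with x hx
    rw [complexMGF_ofReal, hfX x hx]
  have hcoe : Filter.Tendsto (fun x : ℝ => (x : ℂ)) (nhdsWithin x₀ {x₀}ᶜ)
      (nhdsWithin (x₀ : ℂ) {(x₀ : ℂ)}ᶜ) :=
    Complex.continuous_ofReal.continuousWithinAt.tendsto_nhdsWithin fun x hx => by simpa using hx
  exact hcoe.frequently hreal.frequently

theorem one_sub_div_mem_slitPlane {r : ℝ} (hr : 0 < r) {z : ℂ} (hz : z.re < r) :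
    1 - z / r ∈ Complex.slitPlane := by
  left
  rwa [Complex.sub_re, Complex.one_re, Complex.div_ofReal_re, sub_pos, div_lt_one hr]

theorem complexMGF_eq_cpow_of_mgf_eq_rpow {Ω : Type*} [MeasurableSpace Ω] {X : Ω → ℝ}
    {μ : Measure Ω} {a r : ℝ} (hr : 0 < r) (hmgf : ∀ t < r, mgf X μ t = (1 - t / r) ^ (-a))
    {z : ℂ} (hz : z.re < r) : complexMGF X μ z = (1 - z / r) ^ (-a : ℂ) := by
  have hpos {t : ℝ} (ht : t < r) : 0 < 1 - t / r := by rwa [sub_pos, div_lt_one hr]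
  have hint : Iio r ⊆ integrableExpSet X μ := fun t ht =>
    not_imp_comm.1 integral_undef <| by
      rw [← mgf, hmgf t ht]
      exact (Real.rpow_pos_of_pos (hpos ht) _).ne'
  refine eqOn_complexMGF_of_eqOn_mgf (f := fun w => (1 - w / r) ^ (-a : ℂ)) isOpen_Iio
    (convex_Iio r) hint (fun w hw => ?_) (fun t ht => ?_) hz
  · exact (analyticAt_const.sub analyticAt_id.div_const).cpow analyticAt_const
      (one_sub_div_mem_slitPlane hr hw)
  · rw [hmgf t ht, Complex.ofReal_cpow (hpos ht).le]
    push_cast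
    rfl

theorem gammaMeasure_eq_restrict_Ioi_withDensity (a r : ℝ) :
    gammaMeasure a r = (volume.restrict (Ioi 0)).withDensity (gammaPDF a r) := by
  rw [gammaMeasure, Measure.restrict_congr_set Ioi_ae_eq_Ici,
    ← withDensity_indicator measurableSet_Ici, indicator_eq_self.2 fun x hx => ?_]
  contrapose! hx
  simpa using gammaPDF_of_neg (by simpa using hx)

theorem measurable_gammaPDF (a r : ℝ) : Measurable (gammaPDF a r) :=
  (measurable_gammaPDFReal a r).ennreal_ofReal

theorem ae_gammaMeasure_pos (a r : ℝ) : ∀ᵐ s ∂gammaMeasure a r, 0 < s := by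
  rw [gammaMeasure_eq_restrict_Ioi_withDensity]
  exact (withDensity_absolutelyContinuous _ _).ae_le (ae_restrict_mem measurableSet_Ioi)

theorem mgf_gammaMeasure {a r t : ℝ} (ha : 0 < a) (hr : 0 < r) (ht : t < r) :
    mgf id (gammaMeasure a r) t = (1 - t / r) ^ (-a) := by
  have hrt : 0 < r - t := sub_pos.2 ht
  have : 0 < Real.Gamma a := Real.Gamma_pos_of_pos ha
  have hintegrand : ∀ s ∈ Ioi (0 : ℝ),
      (gammaPDF a r s).toReal • Real.exp (t * id s) =
      r ^ a / Real.Gamma a * (s ^ (a - 1) * Real.exp (-((r - t) * s))) := fun s (hs : 0 < s) => by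
    rw [gammaPDF_of_nonneg hs.le, ENNReal.toReal_ofReal (by positivity), smul_eq_mul,
      mul_assoc, mul_assoc, ← Real.exp_add, id]
    ring_nf
  have hratio : 1 - t / r = (r - t) / r := by field_simp
  rw [mgf, gammaMeasure_eq_restrict_Ioi_withDensity, integral_withDensity_eq_integral_toReal_smul
      (measurable_gammaPDF a r) (ae_of_all _ fun _ => ENNReal.ofReal_lt_top),
    setIntegral_congr_fun measurableSet_Ioi hintegrand, integral_const_mul,
    Real.integral_rpow_mul_exp_neg_mul_Ioi ha hrt, hratio, Real.rpow_neg (by positivity),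
    Real.div_rpow hrt.le hr.le, Real.div_rpow zero_le_one hrt.le, Real.one_rpow]
  field_simp

theorem complexMGF_gammaMeasure {a r : ℝ} (ha : 0 < a) (hr : 0 < r) {z : ℂ} (hz : z.re < r) :
    complexMGF id (gammaMeasure a r) z = (1 - z / r) ^ (-a : ℂ) :=
  complexMGF_eq_cpow_of_mgf_eq_rpow hr (fun _ ht => mgf_gammaMeasure ha hr ht) hz

theorem mgf_sq_gaussianReal {v : ℝ≥0} (hv : v ≠ 0) {t : ℝ} (ht : t < 1 / (2 * v)) :
    mgf (fun x => x ^ 2) (gaussianReal 0 v) t = (1 - t / (1 / (2 * v))) ^ (-(1 / 2) : ℝ) := by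
  have : (0 : ℝ) < v := by positivity
  have hb : 0 < 1 / (2 * v) - t := sub_pos.2 ht
  have hratio : 1 - t / (1 / (2 * v)) = 2 * v * (1 / (2 * v) - t) := by field_simp
  have hintegrand (x : ℝ) : gaussianPDFReal 0 v x • Real.exp (t * x ^ 2) =
      (√(2 * Real.pi * v))⁻¹ * Real.exp (-(1 / (2 * v) - t) * x ^ 2) := by
    rw [gaussianPDFReal, sub_zero, smul_eq_mul, mul_assoc, ← Real.exp_add]
    ring_nf
  rw [mgf, integral_gaussianReal_eq_integral_smul hv]
  simp_rw [hintegrand]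
  rw [integral_const_mul, integral_gaussian, hratio, Real.rpow_neg (by positivity),
    ← Real.sqrt_eq_rpow, ← Real.sqrt_inv, ← Real.sqrt_inv, ← Real.sqrt_mul (by positivity)]
  congr 1
  generalize 1 / (2 * (v : ℝ)) - t = b at hb
  field_simp

theorem gaussianReal_map_sq {v : ℝ≥0} (hv : v ≠ 0) :
    (gaussianReal 0 v).map (fun x => x ^ 2) = gammaMeasure (1 / 2) (1 / (2 * v)) := by
  have hmeas : Measurable fun x : ℝ => x ^ 2 := by fun_prop
  have hr : (0 : ℝ) < 1 / (2 * v) := by positivity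
  have := isProbabilityMeasure_gammaMeasure one_half_pos hr
  have := Measure.isProbabilityMeasure_map (μ := gaussianReal 0 v) hmeas.aemeasurable
  refine Measure.ext_of_charFun (funext fun t => ?_)
  have hre : ((t : ℂ) * Complex.I).re < 1 / (2 * v) := by simpa using hr
  rw [← complexMGF_mul_I hmeas.aemeasurable, ← complexMGF_id_mul_I,
    complexMGF_gammaMeasure one_half_pos hr hre]
  exact complexMGF_eq_cpow_of_mgf_eq_rpow hr (fun _ ht => mgf_sq_gaussianReal hv ht) hre

/-! ### Normal variance-mean mixtures -/

/-- The Gaussian kernel with mean `θ s` and variance `σ² s`, whose composition with a law of `s` on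
`[0, ∞)` is a normal variance-mean mixture. For `s < 0` the variance is truncated to `0`. -/
noncomputable def normalVarianceMeanKernel (θ σ : ℝ) : Kernel ℝ ℝ where
  toFun s := gaussianReal (θ * s) (σ ^ 2 * s).toNNReal
  measurable' := measurable_gaussianReal.comp (f := fun s => (θ * s, (σ ^ 2 * s).toNNReal))
    (by fun_prop)

theorem normalVarianceMeanKernel_apply (θ σ s : ℝ) :
    normalVarianceMeanKernel θ σ s = gaussianReal (θ * s) (σ ^ 2 * s).toNNReal :=
  rfl

instance (θ σ : ℝ) : IsMarkovKernel (normalVarianceMeanKernel θ σ) :=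
  ⟨fun s => inferInstanceAs (IsProbabilityMeasure (gaussianReal (θ * s) (σ ^ 2 * s).toNNReal))⟩

theorem map_const_mul_normalVarianceMeanKernel (c θ σ : ℝ) :
    (normalVarianceMeanKernel θ σ).map (fun x => c * x) =
      normalVarianceMeanKernel (c * θ) (c * σ) := by
  ext1 s
  rw [Kernel.map_apply _ (by fun_prop), normalVarianceMeanKernel_apply,
    normalVarianceMeanKernel_apply, gaussianReal_map_const_mul, mul_assoc, mul_pow, mul_assoc,
    Real.toNNReal_mul (sq_nonneg c), Real.toNNReal_of_nonneg (sq_nonneg c)]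

theorem gaussianReal_map_add_mul (m c : ℝ) :
    (gaussianReal 0 1).map (fun v => m + c * v) = gaussianReal m (c ^ 2).toNNReal := by
  rw [← Function.comp_def (fun v => m + v), ← Measure.map_map (by fun_prop) (by fun_prop),
    gaussianReal_map_const_mul, gaussianReal_map_const_add, mul_zero, zero_add, mul_one,
    Real.toNNReal_of_nonneg (sq_nonneg c)]

theorem charFun_comp {α E : Type*} [MeasurableSpace α] [NormedAddCommGroup E]
    [InnerProductSpace ℝ E] [MeasurableSpace E] [OpensMeasurableSpace E] (κ : Kernel α E)
    [IsFiniteKernel κ] (μ : Measure α) [IsFiniteMeasure μ] (t : E) :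
    charFun (κ ∘ₘ μ) t = ∫ s, charFun (κ s) t ∂μ := by
  have hint : Integrable (fun x : E => Complex.exp (inner ℝ x t * Complex.I)) (κ ∘ₘ μ) :=
    .of_bound (Continuous.aestronglyMeasurable (by fun_prop)) 1
      (ae_of_all _ fun x => (Complex.norm_exp_ofReal_mul_I _).le)
  rw [Measure.comp_eq_comp_const_apply] at hint
  rw [charFun, Measure.comp_eq_comp_const_apply, Kernel.integral_comp hint, Kernel.const_apply]
  rfl

/-- The characteristic exponent of the normal law with mean `θ` and variance `σ²`, that is, the
logarithm of its characteristic function at `t`. -/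
noncomputable def normalCharExponent (θ σ t : ℝ) : ℂ :=
  (t * θ : ℝ) * Complex.I - (σ ^ 2 * t ^ 2 / 2 : ℝ)

theorem re_normalCharExponent_nonpos (θ σ t : ℝ) : (normalCharExponent θ σ t).re ≤ 0 := by
  rw [normalCharExponent, Complex.sub_re, Complex.re_ofReal_mul, Complex.I_re, mul_zero,
    Complex.ofReal_re, zero_sub, neg_nonpos]
  positivity

theorem charFun_normalVarianceMeanKernel_comp (θ σ : ℝ) {μ : Measure ℝ} [IsFiniteMeasure μ]
    (hμ : ∀ᵐ s ∂μ, 0 ≤ s) (t : ℝ) :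
    charFun (normalVarianceMeanKernel θ σ ∘ₘ μ) t =
      complexMGF id μ (normalCharExponent θ σ t) := by
  rw [charFun_comp, complexMGF]
  refine integral_congr_ae (hμ.mono fun s hs => ?_)
  simp only [normalVarianceMeanKernel_apply, charFun_gaussianReal, normalCharExponent, id_eq]
  rw [Real.coe_toNNReal _ (by positivity)]
  push_cast
  ring_nf

theorem comp_eq_withDensity_lintegral {α β : Type*} [MeasurableSpace α] [MeasurableSpace β]
    {μ : Measure α} [SFinite μ] {ν : Measure β} [SFinite ν] {κ : Kernel α β} {f : α → β → ℝ≥0∞}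
    (hf : Measurable f.uncurry) (hκ : ∀ᵐ s ∂μ, κ s = ν.withDensity (f s)) :
    κ ∘ₘ μ = ν.withDensity fun x => ∫⁻ s, f s x ∂μ := by
  ext A hA
  rw [Measure.bind_apply hA κ.aemeasurable, withDensity_apply _ hA,
    ← lintegral_lintegral_swap hf.aemeasurable]
  refine lintegral_congr_ae (hκ.mono fun s hs => ?_)
  simp only [hs, withDensity_apply _ hA]

/-! ### Variance-gamma laws -/

/-- The variance-gamma law: the normal variance-mean mixture whose mixing law is the gamma law of
shape `a` and rate `r`. -/
noncomputable def varianceGamma (θ σ a r : ℝ) : Measure ℝ :=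
  normalVarianceMeanKernel θ σ ∘ₘ gammaMeasure a r

theorem isProbabilityMeasure_varianceGamma (θ σ : ℝ) {a r : ℝ} (ha : 0 < a) (hr : 0 < r) :
    IsProbabilityMeasure (varianceGamma θ σ a r) := by
  have := isProbabilityMeasure_gammaMeasure ha hr
  rw [varianceGamma]
  infer_instance

theorem varianceGamma_map_const_mul (c θ σ a r : ℝ) :
    (varianceGamma θ σ a r).map (fun x => c * x) = varianceGamma (c * θ) (c * σ) a r := by
  rw [varianceGamma, Measure.map_comp _ _ (by fun_prop), map_const_mul_normalVarianceMeanKernel,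
    varianceGamma]

theorem gaussianReal_prod_map_mul_eq_varianceGamma (θ σ : ℝ) :
    ((gaussianReal 0 1).prod (gaussianReal 0 1)).map
      (fun p : ℝ × ℝ => p.1 * (θ * p.1 + σ * p.2)) = varianceGamma θ σ (1 / 2) (1 / 2) := by
  have hcond (x : ℝ) : (gaussianReal 0 1).map (fun v => x * (θ * x + σ * v)) =
      normalVarianceMeanKernel θ σ (x ^ 2) := by
    rw [normalVarianceMeanKernel_apply, ← mul_pow, ← gaussianReal_map_add_mul]
    ring_nf
  have hsq : gammaMeasure (1 / 2) (1 / 2) = (gaussianReal 0 1).map (fun x => x ^ 2) := by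
    rw [gaussianReal_map_sq one_ne_zero, NNReal.coe_one, mul_one]
  ext A hA
  have hmeas : Measurable fun p : ℝ × ℝ => p.1 * (θ * p.1 + σ * p.2) := by fun_prop
  rw [varianceGamma, hsq, Measure.bind_apply hA (Kernel.aemeasurable _),
    lintegral_map (Kernel.measurable_coe _ hA) (by fun_prop), Measure.map_apply hmeas hA,
    Measure.prod_apply (hmeas hA)]
  refine lintegral_congr fun x => ?_
  rw [← hcond, Measure.map_apply (by fun_prop) hA]
  rfl

theorem lawZ_eq_varianceGamma (ρ : ℝ) : lawZ ρ = varianceGamma ρ √(1 - ρ ^ 2) (1 / 2) (1 / 2) :=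
  gaussianReal_prod_map_mul_eq_varianceGamma ρ √(1 - ρ ^ 2)

theorem charFun_varianceGamma (θ σ : ℝ) {a r : ℝ} (ha : 0 < a) (hr : 0 < r) (t : ℝ) :
    charFun (varianceGamma θ σ a r) t = (1 - normalCharExponent θ σ t / r) ^ (-a : ℂ) := by
  have := isProbabilityMeasure_gammaMeasure ha hr
  rw [varianceGamma, charFun_normalVarianceMeanKernel_comp θ σ
    ((ae_gammaMeasure_pos a r).mono fun _ => le_of_lt)]
  exact complexMGF_gammaMeasure ha hr ((re_normalCharExponent_nonpos θ σ t).trans_lt hr)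

theorem hasLaw_sum_varianceGamma {Ω ι : Type*} [MeasurableSpace Ω] [Fintype ι] [Nonempty ι]
    {P : Measure Ω} [IsProbabilityMeasure P] {X : ι → Ω → ℝ} {θ σ r : ℝ} {a : ι → ℝ} (hr : 0 < r)
    (ha : ∀ i, 0 < a i) (hX : iIndepFun X P)
    (hlaw : ∀ i, HasLaw (X i) (varianceGamma θ σ (a i) r) P) :
    HasLaw (fun ω => ∑ i, X i ω) (varianceGamma θ σ (∑ i, a i) r) P := by
  have hsum : 0 < ∑ i, a i := Finset.sum_pos (fun i _ => ha i) Finset.univ_nonempty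
  have hmeas : AEMeasurable (fun ω => ∑ i, X i ω) P :=
    Finset.aemeasurable_fun_sum _ fun i _ => (hlaw i).aemeasurable
  have := isProbabilityMeasure_varianceGamma θ σ hsum hr
  have := Measure.isProbabilityMeasure_map (μ := P) hmeas
  refine ⟨hmeas, Measure.ext_of_charFun (funext fun t => ?_)⟩
  set w : ℂ := 1 - normalCharExponent θ σ t / r
  have hw : w ≠ 0 := Complex.slitPlane_ne_zero
    (one_sub_div_mem_slitPlane hr ((re_normalCharExponent_nonpos θ σ t).trans_lt hr))
  calc charFun (P.map fun ω => ∑ i, X i ω) t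
      = ∏ i, charFun (P.map (X i)) t := by
        rw [hX.charFun_map_fun_sum_eq_prod fun i => (hlaw i).aemeasurable, Finset.prod_apply]
    _ = ∏ i, w ^ (-a i : ℂ) :=
        Finset.prod_congr rfl fun i _ => by
          rw [(hlaw i).map_eq, charFun_varianceGamma θ σ (ha i) hr]
    _ = w ^ (-(∑ i, a i : ℝ) : ℂ) := by
        simp_rw [Complex.cpow_def_of_ne_zero hw, ← Complex.exp_sum, ← Finset.mul_sum]
        push_cast
        rw [Finset.sum_neg_distrib]
    _ = charFun (varianceGamma θ σ (∑ i, a i) r) t := (charFun_varianceGamma θ σ hsum hr t).symm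

/-- The density of the variance-gamma law, for `x ≠ 0`; at `x = 0` the formula is a junk value. -/
noncomputable def varianceGammaPDFReal (θ σ a r x : ℝ) : ℝ :=
  2 * r ^ a / (√(2 * Real.pi * σ ^ 2) * Real.Gamma a) * Real.exp (θ * x / σ ^ 2) *
    (|x| / √(θ ^ 2 + 2 * r * σ ^ 2)) ^ (a - 1 / 2) *
    besselK (a - 1 / 2) (√(θ ^ 2 + 2 * r * σ ^ 2) * |x| / σ ^ 2)

theorem exp_neg_mul_mul_exp_neg_sq_div {θ σ r x s L : ℝ} (hσ : σ ≠ 0) (hx : x ≠ 0)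
    (hs : 0 < s) (hL : 0 < L) (hL2 : L ^ 2 = θ ^ 2 + 2 * r * σ ^ 2) :
    Real.exp (-(r * s)) * Real.exp (-(x - θ * s) ^ 2 / (2 * (σ ^ 2 * s))) =
      Real.exp (θ * x / σ ^ 2) *
        Real.exp (-(L * |x| / σ ^ 2 / 2 * (s / (|x| / L) + |x| / L / s))) := by
  have hx2 := sq_abs x
  have := abs_pos.2 hx
  rw [← Real.exp_add, ← Real.exp_add]
  congr 1
  field_simp
  rw [hx2]
  linear_combination s ^ 2 * hL2

theorem gammaPDFReal_mul_gaussianPDFReal_eq (a : ℝ) {θ σ r x s L : ℝ} (hσ : σ ≠ 0) (hx : x ≠ 0)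
    (hs : 0 < s) (hL : 0 < L) (hL2 : L ^ 2 = θ ^ 2 + 2 * r * σ ^ 2) :
    gammaPDFReal a r s * gaussianPDFReal (θ * s) (σ ^ 2 * s).toNNReal x =
      r ^ a / (√(2 * Real.pi * σ ^ 2) * Real.Gamma a) * Real.exp (θ * x / σ ^ 2) *
        (s ^ (a - 1 / 2 - 1) *
          Real.exp (-(L * |x| / σ ^ 2 / 2 * (s / (|x| / L) + |x| / L / s)))) := by
  have hpow : s ^ (a - 1) = s ^ (a - 1 / 2 - 1) * √s := by
    rw [Real.sqrt_eq_rpow, ← Real.rpow_add hs]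
    ring_nf
  have hroot : √(2 * Real.pi * (σ ^ 2 * s)) = √(2 * Real.pi * σ ^ 2) * √s := by
    rw [← mul_assoc, Real.sqrt_mul (by positivity)]
  have hs' : √s ≠ 0 := (Real.sqrt_pos.2 hs).ne'
  rw [gammaPDFReal, if_pos hs.le, gaussianPDFReal, Real.coe_toNNReal _ (by positivity), hroot, hpow]
  calc _ = r ^ a / Real.Gamma a * s ^ (a - 1 / 2 - 1) * √s * (√(2 * Real.pi * σ ^ 2) * √s)⁻¹ *
        (Real.exp (-(r * s)) * Real.exp (-(x - θ * s) ^ 2 / (2 * (σ ^ 2 * s)))) := by ring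
    _ = _ := by
      rw [exp_neg_mul_mul_exp_neg_sq_div hσ hx hs hL hL2]
      field_simp

theorem lintegral_gaussianPDF_gammaMeasure (θ : ℝ) {σ a r x : ℝ} (hσ : σ ≠ 0) (ha : 0 < a)
    (hr : 0 < r) (hx : x ≠ 0) :
    ∫⁻ s, gaussianPDF (θ * s) (σ ^ 2 * s).toNNReal x ∂gammaMeasure a r =
      ENNReal.ofReal (varianceGammaPDFReal θ σ a r x) := by
  set L : ℝ := √(θ ^ 2 + 2 * r * σ ^ 2) with hL
  have hL0 : 0 < L := Real.sqrt_pos.2 (by positivity)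
  have hL2 : L ^ 2 = θ ^ 2 + 2 * r * σ ^ 2 := Real.sq_sqrt (by positivity)
  have : 0 < Real.Gamma a := Real.Gamma_pos_of_pos ha
  have hmeas : Measurable fun s => gaussianPDF (θ * s) (σ ^ 2 * s).toNNReal x :=
    measurable_uncurry_gaussianPDF.comp (f := fun s => (θ * s, (σ ^ 2 * s).toNNReal, x))
      (by fun_prop)
  set C : ℝ := r ^ a / (√(2 * Real.pi * σ ^ 2) * Real.Gamma a) * Real.exp (θ * x / σ ^ 2) with hC
  have hC0 : 0 ≤ C := by positivity
  rw [gammaMeasure_eq_restrict_Ioi_withDensity,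
    lintegral_withDensity_eq_lintegral_mul _ (measurable_gammaPDF a r) hmeas]
  calc ∫⁻ s in Ioi 0, gammaPDF a r s * gaussianPDF (θ * s) (σ ^ 2 * s).toNNReal x
      = ∫⁻ s in Ioi 0, ENNReal.ofReal C * ENNReal.ofReal (s ^ (a - 1 / 2 - 1) *
          Real.exp (-(L * |x| / σ ^ 2 / 2 * (s / (|x| / L) + |x| / L / s)))) := by
        refine setLIntegral_congr_fun measurableSet_Ioi fun s (hs : 0 < s) => ?_
        rw [gammaPDF, gaussianPDF, ← ENNReal.ofReal_mul' (gaussianPDFReal_nonneg _ _ _),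
          ← ENNReal.ofReal_mul hC0, gammaPDFReal_mul_gaussianPDFReal_eq a hσ hx hs hL0 hL2]
    _ = ENNReal.ofReal (varianceGammaPDFReal θ σ a r x) := by
        rw [lintegral_const_mul _ (by fun_prop),
          setLIntegral_Ioi_rpow_mul_exp_eq_besselK _ (by positivity) (by positivity),
          ← ENNReal.ofReal_mul hC0, hC, varianceGammaPDFReal, ← hL]
        ring_nf

theorem varianceGamma_eq_withDensity (θ : ℝ) {σ a r : ℝ} (hσ : σ ≠ 0) (ha : 0 < a) (hr : 0 < r) :
    varianceGamma θ σ a r =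
      volume.withDensity fun x => ENNReal.ofReal (varianceGammaPDFReal θ σ a r x) := by
  have := isProbabilityMeasure_gammaMeasure ha hr
  have hmeas : Measurable
      (fun s : ℝ => gaussianPDF (θ * s) (σ ^ 2 * s).toNNReal).uncurry :=
    measurable_uncurry_gaussianPDF.comp
      (f := fun p : ℝ × ℝ => (θ * p.1, (σ ^ 2 * p.1).toNNReal, p.2)) (by fun_prop)
  rw [varianceGamma, comp_eq_withDensity_lintegral (ν := volume) hmeas]
  · refine withDensity_congr_ae ?_
    filter_upwards [Measure.ae_ne volume (0 : ℝ)] with x hx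
    exact lintegral_gaussianPDF_gammaMeasure θ hσ ha hr hx
  · filter_upwards [ae_gammaMeasure_pos a r] with s hs
    have hvar : 0 < σ ^ 2 * s := by positivity
    exact gaussianReal_of_var_ne_zero _ (Real.toNNReal_pos.2 hvar).ne'

theorem varianceGammaPDFReal_inv_mul {ρ n : ℝ} (hρ : 0 < 1 - ρ ^ 2) (hn : 0 < n) (x : ℝ) :
    varianceGammaPDFReal (n⁻¹ * ρ) (n⁻¹ * √(1 - ρ ^ 2)) (n / 2) (1 / 2) x =
      n ^ ((n + 1) / 2) * 2 ^ ((1 - n) / 2) * |x| ^ ((n - 1) / 2) /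
          (√(Real.pi * (1 - ρ ^ 2)) * Real.Gamma (n / 2)) *
        Real.exp (ρ * n * x / (1 - ρ ^ 2)) * besselK ((n - 1) / 2) (n * |x| / (1 - ρ ^ 2)) := by
  have hσ : (n⁻¹ * √(1 - ρ ^ 2)) ^ 2 = (1 - ρ ^ 2) / n ^ 2 := by
    rw [mul_pow, Real.sq_sqrt hρ.le]
    ring
  have hL : √((n⁻¹ * ρ) ^ 2 + 2 * (1 / 2) * ((1 - ρ ^ 2) / n ^ 2)) = n⁻¹ := by
    rw [show (n⁻¹ * ρ) ^ 2 + 2 * (1 / 2) * ((1 - ρ ^ 2) / n ^ 2) = n⁻¹ ^ 2 by field_simp; ring,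
      Real.sqrt_sq (by positivity)]
  have hν : n / 2 - 1 / 2 = (n - 1) / 2 := by ring
  have hexp : n⁻¹ * ρ * x / ((1 - ρ ^ 2) / n ^ 2) = ρ * n * x / (1 - ρ ^ 2) := by field_simp
  have hbessel : n⁻¹ * |x| / ((1 - ρ ^ 2) / n ^ 2) = n * |x| / (1 - ρ ^ 2) := by field_simp
  have hroot : √(2 * Real.pi * ((1 - ρ ^ 2) / n ^ 2)) = √2 * √(Real.pi * (1 - ρ ^ 2)) / n := by
    rw [← mul_div_assoc, Real.sqrt_div' _ (by positivity), Real.sqrt_sq hn.le, mul_assoc,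
      Real.sqrt_mul zero_le_two]
  have hn_pow : n ^ ((n + 1) / 2) = n * n ^ ((n - 1) / 2) := by
    rw [mul_comm, ← Real.rpow_add_one hn.ne']
    ring_nf
  have htwo_pow : (2 : ℝ) ^ ((1 - n) / 2) = √2 * (1 / 2) ^ (n / 2) := by
    rw [one_div, Real.inv_rpow zero_le_two, ← Real.rpow_neg zero_le_two, Real.sqrt_eq_rpow,
      ← Real.rpow_add two_pos]
    ring_nf
  have hconst : 2 * (1 / 2) ^ (n / 2) / (√2 * √(Real.pi * (1 - ρ ^ 2)) / n * Real.Gamma (n / 2)) =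
      n * (√2 * (1 / 2) ^ (n / 2)) / (√(Real.pi * (1 - ρ ^ 2)) * Real.Gamma (n / 2)) := by
    have : 0 < √(Real.pi * (1 - ρ ^ 2)) := by positivity
    have : 0 < Real.Gamma (n / 2) := Real.Gamma_pos_of_pos (by positivity)
    field_simp
    exact (Real.sq_sqrt zero_le_two).symm
  rw [varianceGammaPDFReal, hσ, hL, hν, hexp, hbessel, hroot, hconst, hn_pow, htwo_pow,
    div_inv_eq_mul, mul_comm |x| n, Real.mul_rpow hn.le (abs_nonneg x)]
  ring

/-- Unit-variance case of the main result of Nadarajah and Pogány: the mean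
`Z̄ = (Z₁ + ⋯ + Zₙ)/n` of `n ≥ 1` i.i.d. copies of the product `Z = XY` of zero mean
correlated normals has law absolutely continuous with respect to Lebesgue measure, with
density `p(x) = n^{(n+1)/2} 2^{(1−n)/2} |x|^{(n−1)/2} / (√(π(1 − ρ²)) Γ(n/2))
· e^{ρnx/(1 − ρ²)} K_{(n−1)/2}(n|x|/(1 − ρ²))`. -/
theorem mean_product_normal_density
    {Ω : Type*} [MeasurableSpace Ω] (P : Measure Ω) [IsProbabilityMeasure P]
    (ρ : ℝ) (hρ : ρ ∈ Set.Ioo (-1 : ℝ) 1) (n : ℕ) (hn : 1 ≤ n)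
    (Zs : Fin n → Ω → ℝ) (hmeas : ∀ i, Measurable (Zs i))
    (hindep : iIndepFun Zs P)
    (hlaw : ∀ i, P.map (Zs i) = lawZ ρ)
    (Zbar : Ω → ℝ) (hZbar : ∀ ω, Zbar ω = (∑ i, Zs i ω) / n) :
    P.map Zbar = volume.withDensity (fun x => ENNReal.ofReal
      ((n : ℝ) ^ (((n : ℝ) + 1) / 2) * 2 ^ ((1 - (n : ℝ)) / 2) * |x| ^ (((n : ℝ) - 1) / 2) /
          (Real.sqrt (Real.pi * (1 - ρ ^ 2)) * Real.Gamma ((n : ℝ) / 2)) *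
        Real.exp (ρ * n * x / (1 - ρ ^ 2)) *
        besselK (((n : ℝ) - 1) / 2) (n * |x| / (1 - ρ ^ 2)))) := by
  have hρ' : 0 < 1 - ρ ^ 2 := by nlinarith [hρ.1, hρ.2]
  have hn' : (0 : ℝ) < n := by positivity
  have : Nonempty (Fin n) := ⟨⟨0, hn⟩⟩
  have hZs (i : Fin n) : HasLaw (Zs i) (varianceGamma ρ √(1 - ρ ^ 2) (1 / 2) (1 / 2)) P :=
    ⟨(hmeas i).aemeasurable, (hlaw i).trans (lawZ_eq_varianceGamma ρ)⟩
  have hsum : HasLaw (fun ω => ∑ i, Zs i ω) (varianceGamma ρ √(1 - ρ ^ 2) (n / 2) (1 / 2)) P := by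
    have := hasLaw_sum_varianceGamma one_half_pos (fun _ => one_half_pos) hindep hZs
    simpa [div_eq_mul_inv] using this
  have hscale : HasLaw (fun x => (n : ℝ)⁻¹ * x)
      (varianceGamma ((n : ℝ)⁻¹ * ρ) ((n : ℝ)⁻¹ * √(1 - ρ ^ 2)) (n / 2) (1 / 2))
      (varianceGamma ρ √(1 - ρ ^ 2) (n / 2) (1 / 2)) :=
    ⟨by fun_prop, varianceGamma_map_const_mul _ _ _ _ _⟩
  have hmean : Zbar = fun ω => (n : ℝ)⁻¹ * ∑ i, Zs i ω :=
    funext fun ω => by rw [hZbar, div_eq_inv_mul]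
  rw [hmean, (hscale.fun_comp hsum).map_eq,
    varianceGamma_eq_withDensity _ (by positivity) (by positivity) one_half_pos]
  simp_rw [varianceGammaPDFReal_inv_mul hρ' hn']
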